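/- For every integer t ≥ 4, the monomial w_3^{2^{t-2}-1}·w_4^{2^{t-2}-2} belongs to the ideal I_{2^t-2,4} of F_2[w_2,w_3,w_4]. -/

import Mathlib

open MvPolynomial

/-- The polynomials `g_r = g_r^{(4)}` in `F_2[w_2,w_3,w_4]` (variables `X 0 = w_2`,
`X 1 = w_3`, `X 2 = w_4`): `g_0 = 1`, `g_r = 0` for `r < 0`, and
`g_r = w_2·g_{r-2} + w_3·g_{r-3} + w_4·g_{r-4}` for `r ≥ 1`. -/
noncomputable def g4 : ℤ → MvPolynomial (Fin 3) (ZMod 2)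
  | r =>
    if r ≤ 0 then (if r = 0 then 1 else 0)
    else X 0 * g4 (r - 2) + X 1 * g4 (r - 3) + X 2 * g4 (r - 4)
  termination_by r => r.toNat
  decreasing_by all_goals omega

/-- The ideal `I_{n,4} = (g_{n-3}, g_{n-2}, g_{n-1}, g_n)` of `F_2[w_2,w_3,w_4]`. -/
noncomputable def I4 (n : ℤ) : Ideal (MvPolynomial (Fin 3) (ZMod 2)) :=
  Ideal.span {g4 (n - 3), g4 (n - 2), g4 (n - 1), g4 n}

/-!
Over `F_2` the generating series `G = ∑ g_r x^r` is the inverse of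
`W = 1 + w_2 x^2 + w_3 x^3 + w_4 x^4`, and by Frobenius the powers
`W^{2^k}` and `G^{2^k}` are sparse.

* In `G = W * G^2` only the term `w_3 x^3` of `W` contributes to odd exponents, so
  `g_{2m+3} = w_3 * g_m^2`; iterating, `g_{2^k(m+3)-3} = w_3^{2^k-1} * g_m^{2^k}`.
* With `q = 2^k`, the coefficient of `x^{4(q-1)}` in `W^q * G = W^{q-1}` reads
  `g_{4q-4} + w_2^q * g_{2q-4} + w_3^q * g_{q-4} = w_4^{q-1}`.

For `2^t = 8q`, squaring the second identity and multiplying by `w_3^{2q-1}` expresses the monomial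
as a combination of `w_3 * g_{4q-4}^2`, `w_2^{2q} * w_3^{2q-1}` and `w_3^{4q-1}`, which by the first
identity are `g_{8q-5}`, `g_{10q-3}` and `g_{12q-3}`; all of these indices are at least `2^t - 5`.
-/

section PowerSeries

variable {R : Type*} [CommRing R]

theorem coeff_pow_expChar (p : ℕ) [ExpChar R p] (f : PowerSeries R) (n : ℕ) :
    PowerSeries.coeff n (f ^ p) = if p ∣ n then PowerSeries.coeff (n / p) f ^ p else 0 := by
  have hp : p ≠ 0 := expChar_ne_zero R p
  have hpow : PowerSeries.map (frobenius R p) (PowerSeries.expand p hp f) = f ^ p :=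
    MvPowerSeries.map_frobenius_expand p hp
  rw [← hpow, PowerSeries.coeff_map, PowerSeries.coeff_expand, apply_ite (frobenius R p), map_zero,
    frobenius_def]

theorem coeff_pow_succ_mul_of_mul_eq_one {P : Polynomial R} {f : PowerSeries R}
    (hPf : (P : PowerSeries R) * f = 1) {d : ℕ} (hd : P.natDegree ≤ d) (m : ℕ) :
    PowerSeries.coeff (m * d) ((P : PowerSeries R) ^ (m + 1) * f) = P.coeff d ^ m := by
  rw [pow_succ, mul_assoc, hPf, mul_one, ← Polynomial.coe_pow, Polynomial.coeff_coe,
    Polynomial.coeff_pow_of_natDegree_le hd]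

end PowerSeries

theorem g4_of_neg {r : ℤ} (hr : r < 0) : g4 r = 0 := by
  rw [g4, if_pos hr.le, if_neg hr.ne]

theorem g4_zero : g4 0 = 1 := by
  rw [g4, if_pos le_rfl, if_pos rfl]

theorem g4_eq_of_ne_zero {r : ℤ} (hr : r ≠ 0) :
    g4 r = X 0 * g4 (r - 2) + X 1 * g4 (r - 3) + X 2 * g4 (r - 4) := by
  rcases hr.lt_or_gt with hneg | hpos
  · simp [g4_of_neg, hneg, show r - 2 < 0 by lia, show r - 3 < 0 by lia, show r - 4 < 0 by lia]
  · rw [g4, if_neg hpos.not_ge]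

theorem g4_one : g4 1 = 0 := by
  simp [g4_eq_of_ne_zero one_ne_zero, g4_of_neg]

theorem g4_two : g4 2 = X 0 := by
  simp [g4_eq_of_ne_zero two_ne_zero, g4_of_neg, g4_zero]

theorem g4_mem_I4 {n r : ℤ} (hn : 0 ≤ n) (hr : n - 3 ≤ r) : g4 r ∈ I4 n := by
  by_cases hrn : r ≤ n
  · apply Ideal.subset_span
    obtain rfl | rfl | rfl | rfl : r = n - 3 ∨ r = n - 2 ∨ r = n - 1 ∨ r = n := by lia
    all_goals simp
  · rw [g4_eq_of_ne_zero (by lia)]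
    exact add_mem (add_mem (Ideal.mul_mem_left _ _ (g4_mem_I4 hn (by lia)))
      (Ideal.mul_mem_left _ _ (g4_mem_I4 hn (by lia))))
      (Ideal.mul_mem_left _ _ (g4_mem_I4 hn (by lia)))
termination_by (r - n).toNat

/-- The generating series `G = ∑ g_r x^r`. -/
noncomputable def g4Series : PowerSeries (MvPolynomial (Fin 3) (ZMod 2)) :=
  PowerSeries.mk fun n => g4 n

/-- The polynomial `W = 1 + w_2 x^2 + w_3 x^3 + w_4 x^4`, the inverse of `g4Series`. -/
noncomputable def swPoly : Polynomial (MvPolynomial (Fin 3) (ZMod 2)) :=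
  1 + Polynomial.C (X 0) * Polynomial.X ^ 2 + Polynomial.C (X 1) * Polynomial.X ^ 3
    + Polynomial.C (X 2) * Polynomial.X ^ 4

theorem natDegree_swPoly_le : swPoly.natDegree ≤ 4 := by
  unfold swPoly
  compute_degree

theorem coeff_swPoly_four : swPoly.coeff 4 = X 2 := by
  simp [swPoly, Polynomial.coeff_one, Polynomial.coeff_X_pow]

theorem coe_swPoly_pow_two_pow (k : ℕ) :
    (swPoly : PowerSeries (MvPolynomial (Fin 3) (ZMod 2))) ^ 2 ^ k =
      1 + PowerSeries.C (X 0 ^ 2 ^ k) * PowerSeries.X ^ (2 * 2 ^ k)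
        + PowerSeries.C (X 1 ^ 2 ^ k) * PowerSeries.X ^ (3 * 2 ^ k)
        + PowerSeries.C (X 2 ^ 2 ^ k) * PowerSeries.X ^ (4 * 2 ^ k) := by
  rw [← Polynomial.coe_pow, swPoly]
  simp [add_pow_char_pow, mul_pow, pow_mul]

theorem coeff_g4Series (n : ℕ) : PowerSeries.coeff n g4Series = g4 n :=
  PowerSeries.coeff_mk n _

theorem coeff_X_pow_mul_g4Series (n j : ℕ) :
    PowerSeries.coeff n (PowerSeries.X ^ j * g4Series) = g4 (n - j) := by
  rw [PowerSeries.coeff_X_pow_mul']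
  split_ifs with hjn
  · rw [coeff_g4Series, Nat.cast_sub hjn]
  · rw [g4_of_neg (by lia)]

theorem coeff_swPoly_pow_two_pow_mul_g4Series (k n : ℕ) :
    PowerSeries.coeff n ((swPoly : PowerSeries _) ^ 2 ^ k * g4Series) =
      g4 n + X 0 ^ 2 ^ k * g4 (n - 2 * 2 ^ k) + X 1 ^ 2 ^ k * g4 (n - 3 * 2 ^ k)
        + X 2 ^ 2 ^ k * g4 (n - 4 * 2 ^ k) := by
  simp only [coe_swPoly_pow_two_pow, add_mul, one_mul, mul_assoc, map_add,
    PowerSeries.coeff_C_mul, coeff_X_pow_mul_g4Series, coeff_g4Series]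
  push_cast
  rfl

theorem swPoly_mul_g4Series : (swPoly : PowerSeries _) * g4Series = 1 := by
  ext1 n
  have hcoeff := coeff_swPoly_pow_two_pow_mul_g4Series 0 n
  simp only [pow_zero, pow_one, mul_one] at hcoeff
  rw [hcoeff, PowerSeries.coeff_one]
  split_ifs with hn
  · simp [hn, g4_zero, g4_of_neg]
  · rw [add_assoc, add_assoc, ← add_assoc (X 0 * _), ← g4_eq_of_ne_zero (by exact_mod_cast hn),
      CharTwo.add_self_eq_zero]

theorem coeff_two_mul_add_three_swPoly_mul_sq
    (f : PowerSeries (MvPolynomial (Fin 3) (ZMod 2))) (m : ℕ) :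
    PowerSeries.coeff (2 * m + 3) ((swPoly : PowerSeries _) * f ^ 2) =
      X 1 * PowerSeries.coeff m f ^ 2 := by
  have hodd (h : PowerSeries (MvPolynomial (Fin 3) (ZMod 2))) :
      PowerSeries.coeff (2 * m + 3) (h ^ 2) = 0 := by
    rw [coeff_pow_expChar 2, if_neg (by lia)]
  have heven : PowerSeries.coeff (2 * m) (f ^ 2) = PowerSeries.coeff m f ^ 2 := by
    simp [coeff_pow_expChar 2]
  have hW := coe_swPoly_pow_two_pow 0
  simp only [pow_zero, pow_one, mul_one] at hW
  have hX2 : PowerSeries.X ^ 2 * f ^ 2 = (PowerSeries.X * f) ^ 2 := by ring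
  have hX4 : PowerSeries.X ^ 4 * f ^ 2 = (PowerSeries.X ^ 2 * f) ^ 2 := by ring
  simp only [hW, add_mul, one_mul, mul_assoc, map_add, PowerSeries.coeff_C_mul,
    PowerSeries.coeff_X_pow_mul, heven, hX2, hX4, hodd, mul_zero, zero_add, add_zero]

theorem g4_two_mul_add_three (m : ℤ) : g4 (2 * m + 3) = X 1 * g4 m ^ 2 := by
  rcases lt_or_ge m 0 with hneg | hnonneg
  · obtain rfl | hlt : m = -1 ∨ 2 * m + 3 < 0 := by lia
    · simp [g4_one, g4_of_neg]
    · simp [g4_of_neg, hlt, hneg]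
  · lift m to ℕ using hnonneg
    have hG : g4Series = swPoly * g4Series ^ 2 := by
      rw [sq, ← mul_assoc, swPoly_mul_g4Series, one_mul]
    have hcoeff := coeff_two_mul_add_three_swPoly_mul_sq g4Series m
    rw [← hG, coeff_g4Series, coeff_g4Series] at hcoeff
    exact_mod_cast hcoeff

theorem g4_two_pow_mul_sub_three (k : ℕ) (m : ℤ) :
    g4 (2 ^ k * (m + 3) - 3) = X 1 ^ (2 ^ k - 1) * g4 m ^ 2 ^ k := by
  induction k with
  | zero => simp
  | succ k ih =>
    have hexp : 2 ^ (k + 1) - 1 = 1 + (2 ^ k - 1) * 2 := by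
      have := Nat.one_le_two_pow (n := k)
      lia
    rw [show (2 ^ (k + 1) * (m + 3) - 3 : ℤ) = 2 * (2 ^ k * (m + 3) - 3) + 3 by ring,
      g4_two_mul_add_three, ih, hexp]
    ring

theorem X_two_pow_two_pow_sub_one_eq (k : ℕ) :
    X 2 ^ (2 ^ k - 1) = g4 (4 * 2 ^ k - 4) + X 0 ^ 2 ^ k * g4 (2 * 2 ^ k - 4)
      + X 1 ^ 2 ^ k * g4 (2 ^ k - 4) := by
  have hpos : 1 ≤ 2 ^ k := Nat.one_le_two_pow
  have htop := coeff_pow_succ_mul_of_mul_eq_one swPoly_mul_g4Series natDegree_swPoly_le (2 ^ k - 1)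
  rw [Nat.sub_add_cancel hpos, coeff_swPoly_pow_two_pow_mul_g4Series, coeff_swPoly_four] at htop
  push_cast [hpos] at htop
  rw [← htop, g4_of_neg (r := (2 ^ k - 1) * 4 - 4 * 2 ^ k) (by lia)]
  ring_nf

theorem X_one_pow_mul_X_two_pow_eq (k : ℕ) :
    X 1 ^ (2 ^ (k + 1) - 1) * X 2 ^ (2 ^ (k + 1) - 2) =
      X 1 ^ (2 ^ (k + 1) - 2) * g4 (8 * 2 ^ k - 5)
        + g4 (2 * 2 ^ k - 4) ^ 2 * g4 (10 * 2 ^ k - 3)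
        + g4 (2 ^ k - 4) ^ 2 * g4 (12 * 2 ^ k - 3) := by
  have h8 : g4 (8 * 2 ^ k - 5) = X 1 * g4 (4 * 2 ^ k - 4) ^ 2 := by
    rw [← g4_two_mul_add_three]
    ring_nf
  have h10 : g4 (10 * 2 ^ k - 3) = X 1 ^ (2 ^ (k + 1) - 1) * X 0 ^ 2 ^ (k + 1) := by
    rw [← g4_two, ← g4_two_pow_mul_sub_three]
    ring_nf
  have h12 : g4 (12 * 2 ^ k - 3) = X 1 ^ (2 ^ (k + 2) - 1) := by
    have hpow := g4_two_pow_mul_sub_three (k + 2) 0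
    rw [g4_zero, one_pow, mul_one] at hpow
    rw [← hpow]
    ring_nf
  obtain ⟨e, he⟩ : ∃ e, 2 ^ k = e + 1 := Nat.exists_eq_add_one.2 (by positivity)
  have hsq : (X 2 : MvPolynomial (Fin 3) (ZMod 2)) ^ (2 ^ (k + 1) - 2) =
      (X 2 ^ (2 ^ k - 1)) ^ 2 := by
    rw [← pow_mul, pow_succ, he, add_one_mul, Nat.add_sub_cancel, Nat.add_sub_cancel]
  rw [h8, h10, h12, hsq, X_two_pow_two_pow_sub_one_eq, CharTwo.add_sq, CharTwo.add_sq]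
  simp only [pow_succ 2, he, show (e + 1) * 2 - 1 = 2 * e + 1 by lia,
    show (e + 1) * 2 - 2 = 2 * e by lia, show (e + 1) * 2 * 2 - 1 = 4 * e + 3 by lia]
  ring

/-- Lemma 5.3(b): for every `t ≥ 4`, `w_3^{2^{t-2}-1} w_4^{2^{t-2}-2} ∈ I_{2^t-2,4}`. -/
theorem stmt16 (t : ℕ) (ht : 4 ≤ t) :
    (X 1 : MvPolynomial (Fin 3) (ZMod 2)) ^ (2 ^ (t - 2) - 1) * X 2 ^ (2 ^ (t - 2) - 2)
      ∈ I4 (2 ^ t - 2) := by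
  obtain ⟨k, rfl⟩ : ∃ k, t = k + 3 := ⟨t - 3, by lia⟩
  have hpos : (1 : ℤ) ≤ 2 ^ k := one_le_pow₀ one_le_two
  have hpow : (2 : ℤ) ^ (k + 3) = 8 * 2 ^ k := by ring
  have hmem {r : ℤ} (hr : 8 * 2 ^ k - 5 ≤ r) : g4 r ∈ I4 (2 ^ (k + 3) - 2) :=
    g4_mem_I4 (by lia) (by lia)
  rw [show k + 3 - 2 = k + 1 by lia, X_one_pow_mul_X_two_pow_eq]
  exact add_mem (add_mem (Ideal.mul_mem_left _ _ (hmem le_rfl))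
    (Ideal.mul_mem_left _ _ (hmem (by lia)))) (Ideal.mul_mem_left _ _ (hmem (by lia)))
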